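/- arXiv:0907.3254 — 2 statements merged into one kernel-verified Lean document; each statement's English description precedes it below -/
import Mathlib

section
/- Let n ≥ 1 and 1 ≤ k ≤ n. For each j with 0 ≤ j ≤ k−1, the number of paths p in 𝒫(n,1,1) with p_1 = −1 and p_{2n+1} = +1 that have exactly k−1 peaks, of which exactly j lie on or below the x-axis, equals (1/k)·C(n,k−1)·C(n−1,k−1). -/
open Finset

/-- The sum of the first `m` entries of a sequence `p` of length `N` (the height `s_m`). -/
def psum {N : ℕ} (p : Fin N → ℤ) (m : ℕ) : ℤ :=
  ∑ j ∈ Finset.univ.filter (fun j : Fin N => (j : ℕ) < m), p j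


def bv (b : Bool) : ℤ := if b = true then 1 else -1
def gg {M : ℕ} (w : Fin (M+1) → Bool) (m : ℕ) : ℤ :=
  ∑ i ∈ range m, bv (w (Fin.ofNat (M+1) i))
def TT {M : ℕ} (w : Fin (M+1) → Bool) : Finset (Fin (M+1)) :=
  univ.filter fun r => w r = false ∧ w (r - 1) = true
def ups {M : ℕ} (w : Fin (M+1) → Bool) : ℕ := (univ.filter fun i => w i = true).card
def rot {M : ℕ} (r : Fin (M+1)) (w : Fin (M+1) → Bool) : Fin (M+1) → Bool := fun i => w (i + r)
def st {M : ℕ} (w : Fin (M+1) → Bool) : ℕ :=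
  ((TT w).filter fun t => t ≠ 0 ∧ gg w t.val ≤ 0).card

theorem ups_rot {M : ℕ} (r : Fin (M+1)) (w : Fin (M+1) → Bool) : ups (rot r w) = ups w := by
  unfold ups rot
  refine Finset.card_equiv (Equiv.addRight r) ?_
  intro i; simp

theorem mem_TT_rot {M : ℕ} (r t : Fin (M+1)) (w : Fin (M+1) → Bool) :
    t ∈ TT (rot r w) ↔ t + r ∈ TT w := by
  simp only [TT, mem_filter, mem_univ, true_and]
  unfold rot
  rw [show t - 1 + r = t + r - 1 by abel]

theorem card_TT_rot {M : ℕ} (r : Fin (M+1)) (w : Fin (M+1) → Bool) :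
    (TT (rot r w)).card = (TT w).card := by
  refine Finset.card_equiv (Equiv.addRight r) ?_
  intro i; simp [mem_TT_rot]

theorem gg_total {n : ℕ} (w : Fin (2*n+1) → Bool) (h : ups w = n + 1) : gg w (2*n+1) = 1 := by
  unfold gg
  rw [Finset.sum_range]
  have : ∀ i : Fin (2*n+1), bv (w (Fin.ofNat (2*n+1) i.val)) = 2 * (if w i = true then 1 else 0) - 1 := by
    intro i
    have : Fin.ofNat (2*n+1) i.val = i := by ext; simp [Nat.mod_eq_of_lt i.isLt]
    rw [this]; unfold bv; split_ifs <;> norm_num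
  rw [Finset.sum_congr rfl (fun i _ => this i), Finset.sum_sub_distrib, ← Finset.mul_sum,
    Finset.sum_boole]
  unfold ups at h
  rw [h]; simp; ring

theorem gg_add {M : ℕ} (w : Fin (M+1) → Bool) (m : ℕ) : gg w (M + 1 + m) = gg w (M+1) + gg w m := by
  unfold gg
  rw [Finset.sum_range_add]
  congr 1
  apply Finset.sum_congr rfl
  intro i _
  congr 2
  ext; simp

theorem gg_rot {M : ℕ} (r : Fin (M+1)) (w : Fin (M+1) → Bool) (m : ℕ) :
    gg (rot r w) m = gg w (r.val + m) - gg w r.val := by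
  unfold gg
  rw [Finset.sum_range_add, add_sub_cancel_left]
  apply Finset.sum_congr rfl
  intro i _
  unfold rot
  congr 2
  ext; simp [Fin.val_add, add_comm]

def key {M : ℕ} (w : Fin (M+1) → Bool) (t : Fin (M+1)) : ℤ := (M+1) * gg w t.val - t.val

theorem key_lt {M : ℕ} (w : Fin (M+1) → Bool) (h : gg w (M+1) = 1) (r t : Fin (M+1)) :
    (t - r ≠ 0 ∧ gg (rot r w) (t - r).val ≤ 0) ↔ key w t < key w r := by
  rw [gg_rot]
  have ht := t.isLt
  have hr := r.isLt
  unfold key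
  rcases lt_trichotomy r t with hrt | rfl | hrt
  · have h1 : (t - r).val = t.val - r.val := Fin.sub_val_of_le hrt.le
    have hv : r.val < t.val := hrt
    rw [h1, show r.val + (t.val - r.val) = t.val by omega]
    have h2 : t - r ≠ 0 := sub_ne_zero.2 hrt.ne'
    simp only [h2, ne_eq, not_false_eq_true, true_and]
    constructor
    · intro h; nlinarith
    · intro h
      by_contra! hc
      have : gg w r.val + 1 ≤ gg w t.val := by linarith
      have : ((M:ℤ)+1) * (gg w r.val + 1) ≤ (M+1) * gg w t.val := by gcongr
      have : (t.val : ℤ) < M + 1 := by exact_mod_cast ht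
      nlinarith
  · simp
  · have hv : t.val < r.val := hrt
    have h1 : (t - r).val = M + 1 + t.val - r.val := by
      rw [Fin.sub_def]; simp only
      rw [Nat.mod_eq_of_lt] <;> omega
    rw [h1, show r.val + (M + 1 + t.val - r.val) = M + 1 + t.val by omega, gg_add, h]
    have h2 : t - r ≠ 0 := sub_ne_zero.2 hrt.ne
    simp only [h2, ne_eq, not_false_eq_true, true_and]
    constructor
    · intro h
      have : gg w t.val + 1 ≤ gg w r.val := by linarith
      have : ((M:ℤ)+1) * (gg w t.val + 1) ≤ (M+1) * gg w r.val := by gcongr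
      have : (r.val : ℤ) < M + 1 := by exact_mod_cast hr
      nlinarith
    · intro h
      by_contra! hc
      have : gg w r.val ≤ gg w t.val := by linarith
      have : ((M:ℤ)+1) * (gg w r.val) ≤ (M+1) * gg w t.val := by gcongr
      have : (t.val : ℤ) < r.val := by exact_mod_cast hv
      nlinarith

theorem key_inj {M : ℕ} (w : Fin (M+1) → Bool) : Function.Injective (key w) := by
  intro a b h
  unfold key at h
  have ha := a.isLt
  have hb := b.isLt
  have h3 : ((M:ℤ)+1) ∣ (a.val : ℤ) - b.val := ⟨gg w a.val - gg w b.val, by linarith⟩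
  have h4 : (a.val : ℤ) - b.val = 0 := by
    apply Int.eq_zero_of_abs_lt_dvd h3
    rw [abs_lt]; omega
  ext; omega

theorem st_rot {M : ℕ} (w : Fin (M+1) → Bool) (h : gg w (M+1) = 1) (r : Fin (M+1)) :
    st (rot r w) = ((TT w).filter fun t => key w t < key w r).card := by
  unfold st
  refine Finset.card_equiv (Equiv.addRight r) ?_
  intro i
  simp only [mem_filter, mem_TT_rot, Equiv.coe_addRight]
  rw [← key_lt w h, add_sub_cancel_right]

theorem rank_unique {α : Type*} [DecidableEq α] (T : Finset α) (f : α → ℤ) (hf : Function.Injective f)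
    (j : ℕ) (hj : j < T.card) :
    (T.filter fun r => (T.filter fun t => f t < f r).card = j).card = 1 := by
  have hlt : ∀ a ∈ T, ∀ b ∈ T, f a < f b →
      (T.filter fun t => f t < f a).card < (T.filter fun t => f t < f b).card := by
    intro a ha b hb hab
    apply Finset.card_lt_card
    rw [Finset.ssubset_iff_of_subset]
    · exact ⟨a, by simp [ha, hab], by simp⟩
    · intro t; simp only [mem_filter]; exact fun h => ⟨h.1, h.2.trans hab⟩
  have hinj : ∀ a ∈ T, ∀ b ∈ T, 
      (T.filter fun t => f t < f a).card = (T.filter fun t => f t < f b).card → a = b := by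
    intro a ha b hb hab
    apply hf
    rcases lt_trichotomy (f a) (f b) with h | h | h
    · exact absurd hab (hlt a ha b hb h).ne
    · exact h
    · exact absurd hab (hlt b hb a ha h).ne'
  have himg : T.image (fun r => (T.filter fun t => f t < f r).card) = range T.card := by
    apply Finset.eq_of_subset_of_card_le
    · intro x hx
      simp only [mem_image] at hx
      obtain ⟨a, ha, rfl⟩ := hx
      rw [mem_range]
      apply Finset.card_lt_card
      rw [Finset.ssubset_iff_of_subset (filter_subset _ _)]
      exact ⟨a, ha, by simp⟩
    · rw [Finset.card_image_of_injOn, card_range]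
      intro a ha b hb
      exact hinj a ha b hb
  have hm : j ∈ T.image (fun r => (T.filter fun t => f t < f r).card) := by
    rw [himg]; simpa using hj
  simp only [mem_image] at hm
  obtain ⟨a, ha, hr⟩ := hm
  rw [Finset.card_eq_one]
  refine ⟨a, ?_⟩
  ext b
  simp only [mem_filter, mem_singleton]
  constructor
  · rintro ⟨hb, hb2⟩
    exact hinj b hb a ha (by rw [hb2, hr])
  · rintro rfl; exact ⟨ha, hr⟩

def rotEquiv {M : ℕ} (r : Fin (M+1)) : (Fin (M+1) → Bool) ≃ (Fin (M+1) → Bool) where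
  toFun := rot r
  invFun := rot (-r)
  left_inv w := by ext i; simp [rot]
  right_inv w := by ext i; simp [rot]

theorem double_count {M : ℕ} (W : Finset (Fin (M+1) → Bool)) (hW : ∀ r w, rot r w ∈ W ↔ w ∈ W)
    (P : (Fin (M+1) → Bool) → Prop) [DecidablePred P] (c : ℕ)
    (hc : ∀ w ∈ W, (univ.filter fun r => P (rot r w)).card = c) :
    W.card * c = (M+1) * (W.filter P).card := by
  have h1 : ∑ w ∈ W, (univ.filter fun r => P (rot r w)).card =
      ∑ r : Fin (M+1), (W.filter fun w => P (rot r w)).card := by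
    simp only [Finset.card_filter]
    exact Finset.sum_comm
  have h2 : ∀ r : Fin (M+1), (W.filter fun w => P (rot r w)).card = (W.filter P).card := by
    intro r
    refine Finset.card_equiv (rotEquiv r) ?_
    intro w
    simp [rotEquiv, hW]
  rw [Finset.sum_congr rfl hc, Finset.sum_congr rfl (fun r _ => h2 r)] at h1
  simpa using h1

theorem cyc_main (n k j : ℕ) (hj : j < k) :
    (univ.filter fun w : Fin (2*n+1) → Bool => (ups w = n+1 ∧ (TT w).card = k) ∧ 0 ∈ TT w ∧ st w = j).card * k
     = (univ.filter fun w : Fin (2*n+1) → Bool => (ups w = n+1 ∧ (TT w).card = k) ∧ 0 ∈ TT w).card := by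
  set W := univ.filter fun w : Fin (2*n+1) → Bool => (ups w = n+1 ∧ (TT w).card = k) with hWd
  have hW : ∀ r w, rot r w ∈ W ↔ w ∈ W := by
    intro r w; simp [hWd, ups_rot, card_TT_rot]
  have e1 := double_count W hW (fun w => 0 ∈ TT w) k (by
    intro w hw
    simp only [hWd, mem_filter, mem_univ, true_and] at hw
    rw [← hw.2]
    congr 1
    ext r; simp [mem_TT_rot])
  have e2 := double_count W hW (fun w => 0 ∈ TT w ∧ st w = j) 1 (by
    intro w hw
    simp only [hWd, mem_filter, mem_univ, true_and] at hw
    refine Eq.trans ?_ (rank_unique (TT w) (key w) (key_inj w) j (by omega))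
    congr 1
    ext r; simp [mem_TT_rot, st_rot w (gg_total w hw.1)])
  rw [hWd, filter_filter] at e1 e2
  rw [hWd] at *
  have : (2*n+1) * ((univ.filter fun w : Fin (2*n+1) → Bool => (ups w = n+1 ∧ (TT w).card = k) ∧ 0 ∈ TT w ∧ st w = j).card * k)
     = (2*n+1) * (univ.filter fun w : Fin (2*n+1) → Bool => (ups w = n+1 ∧ (TT w).card = k) ∧ 0 ∈ TT w).card := by
    rw [← e1, ← mul_assoc, ← e2]; ring
  exact Nat.eq_of_mul_eq_mul_left (by omega) this

/-- linear peaks -/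
def pks {N : ℕ} (w : Fin (N+1) → Bool) : ℕ :=
  (univ.filter fun i : Fin N => w i.castSucc = true ∧ w i.succ = false).card

def cnt (N : ℕ) (s : Bool) (a m : ℕ) : ℕ :=
  (univ.filter fun w : Fin (N+1) → Bool => w 0 = s ∧ w (Fin.last N) = true ∧ ups w = a ∧ pks w = m).card

theorem ups_cons {N : ℕ} (s : Bool) (w : Fin (N+1) → Bool) :
    ups (Fin.cons s w : Fin (N+2) → Bool) = (if s = true then 1 else 0) + ups w := by
  unfold ups
  rw [Finset.card_filter, Fin.sum_univ_succ, Finset.card_filter]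
  simp

theorem pks_cons {N : ℕ} (s : Bool) (w : Fin (N+1) → Bool) :
    pks (Fin.cons s w : Fin (N+2) → Bool) = (if s = true ∧ w 0 = false then 1 else 0) + pks w := by
  unfold pks
  rw [Finset.card_filter, Fin.sum_univ_succ, Finset.card_filter]
  congr 1

theorem cnt_succ (N : ℕ) (s : Bool) (a m : ℕ) :
    cnt (N+1) s a m =
      (univ.filter fun w : Fin (N+1) → Bool => w (Fin.last N) = true ∧
        (if s = true then 1 else 0) + ups w = a ∧
        (if s = true ∧ w 0 = false then 1 else 0) + pks w = m).card := by
  unfold cnt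
  symm
  refine Finset.card_bij (fun w _ => (Fin.cons s w : Fin (N+2) → Bool)) ?_ ?_ ?_
  · intro w hw
    simp only [mem_filter, mem_univ, true_and] at hw ⊢
    rw [ups_cons, pks_cons, ← Fin.succ_last]
    simpa using hw
  · intro a _ b _ h
    exact (Fin.cons_injective2 h).2
  · intro w hw
    simp only [mem_filter, mem_univ, true_and] at hw
    have hc : (Fin.cons s (Fin.tail w) : Fin (N+2) → Bool) = w := by
      rw [← hw.1]; exact Fin.cons_self_tail w
    refine ⟨Fin.tail w, ?_, hc⟩
    rw [← hc, ups_cons, pks_cons, ← Fin.succ_last] at hw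
    simpa using hw

theorem filter_split {α : Type*} (S : Finset α) (f : α → Bool) (P : α → Prop) [DecidablePred P] :
   (S.filter P).card = (S.filter fun w => f w = true ∧ P w).card + (S.filter fun w => f w = false ∧ P w).card := by
  rw [← Finset.card_filter_add_card_filter_not (s := S.filter P) (p := fun w => f w = true), filter_filter, filter_filter]
  simp [and_comm]

theorem cnt_false (N a m : ℕ) : cnt (N+1) false a m = cnt N true a m + cnt N false a m := by
  rw [cnt_succ, filter_split _ (fun w => w 0)]
  simp [cnt]

theorem cnt_true_zero (N m : ℕ) : cnt N true 0 m = 0 := by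
  unfold cnt
  rw [Finset.card_eq_zero, Finset.filter_eq_empty_iff]
  rintro w _ ⟨h0, _, h, _⟩
  unfold ups at h
  rw [Finset.card_eq_zero, Finset.filter_eq_empty_iff] at h
  exact h (mem_univ 0) h0

theorem cnt_true_succ_zero (N a : ℕ) : cnt (N+1) true (a+1) 0 = cnt N true a 0 := by
  rw [cnt_succ, filter_split _ (fun w => w 0)]
  have : (univ.filter fun w : Fin (N+1) → Bool => w 0 = false ∧ w (Fin.last N) = true ∧
        (if true = true then 1 else 0) + ups w = a+1 ∧
        (if true = true ∧ w 0 = false then 1 else 0) + pks w = 0) = ∅ := by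
    rw [Finset.filter_eq_empty_iff]
    rintro w _ ⟨h0, _, _, h⟩
    simp [h0] at h
  rw [this, card_empty, add_zero]
  unfold cnt
  congr 1
  ext w
  simp only [mem_filter, mem_univ, true_and, if_true]
  constructor
  · rintro ⟨h0, h1, h2, h3⟩
    simp [h0] at h3
    exact ⟨h0, h1, by omega, h3⟩
  · rintro ⟨h0, h1, h2, h3⟩
    simp [h0]
    exact ⟨h1, by omega, h3⟩

theorem cnt_true_succ_succ (N a m : ℕ) :
    cnt (N+1) true (a+1) (m+1) = cnt N true a (m+1) + cnt N false a m := by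
  rw [cnt_succ, filter_split _ (fun w => w 0)]
  unfold cnt
  congr 2
  · ext w
    simp only [mem_filter, mem_univ, true_and, if_true]
    constructor
    · rintro ⟨h0, h1, h2, h3⟩
      simp [h0] at h3
      exact ⟨h0, h1, by omega, h3⟩
    · rintro ⟨h0, h1, h2, h3⟩
      simp [h0]
      exact ⟨h1, by omega, h3⟩
  · ext w
    simp only [mem_filter, mem_univ, true_and, if_true]
    constructor
    · rintro ⟨h0, h1, h2, h3⟩
      simp [h0] at h3
      exact ⟨h0, h1, by omega, by omega⟩
    · rintro ⟨h0, h1, h2, h3⟩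
      simp [h0]
      exact ⟨h1, by omega, by omega⟩

theorem cnt_big (N : ℕ) (s : Bool) (a m : ℕ) (h : N + 1 < a) : cnt N s a m = 0 := by
  unfold cnt
  rw [Finset.card_eq_zero, Finset.filter_eq_empty_iff]
  rintro w _ ⟨_, _, h3, _⟩
  have : ups w ≤ N + 1 := by
    unfold ups
    exact (Finset.card_le_univ _).trans (by simp)
  omega

/-- closed form, `u` ups in total and `d` downs. -/
def cfT : ℕ → ℕ → ℕ → ℕ
  | 0, _, _ => 0
  | _+1, 0, 0 => 1
  | _+1, 0, _+1 => 0
  | _+1, _+1, 0 => 0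
  | u+1, d+1, m+1 => Nat.choose d m * Nat.choose u (m+1)
def cfF : ℕ → ℕ → ℕ → ℕ
  | 0, _, _ => 0
  | _, 0, _ => 0
  | u+1, d+1, m => Nat.choose d m * Nat.choose u m

theorem cnt_closed (N : ℕ) : ∀ u d m, u + d = N + 1 →
    cnt N true u m = cfT u d m ∧ cnt N false u m = cfF u d m := by
  induction N with
  | zero =>
    intro u d m h
    have e : ∀ s, cnt 0 s u m = if s = true ∧ u = 1 ∧ m = 0 then 1 else 0 := by
      intro s
      unfold cnt
      split_ifs with hh
      · rw [Finset.card_eq_one]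
        refine ⟨fun _ => true, ?_⟩
        ext w
        simp only [mem_filter, mem_univ, true_and, mem_singleton]
        constructor
        · rintro ⟨h1, h2, _⟩
          funext i
          rw [Fin.fin_one_eq_zero i, h1, hh.1]
        · rintro rfl
          simp [hh, ups, pks]
      · rw [Finset.card_eq_zero, Finset.filter_eq_empty_iff]
        rintro w _ ⟨h1, h2, h3, h4⟩
        have h2' : w 0 = true := h2
        apply hh
        refine ⟨by rw [← h1, h2'], ?_, ?_⟩
        · rw [← h3]; unfold ups; rw [Finset.card_filter, Fin.sum_univ_one]; simp [h2']
        · rw [← h4]; simp [pks]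
    rw [e, e]
    obtain ⟨rfl, rfl⟩ | ⟨rfl, rfl⟩ : (u = 0 ∧ d = 1) ∨ (u = 1 ∧ d = 0) := by omega
    · simp [cfT, cfF]
    · cases m <;> simp [cfT, cfF]
  | succ N ih =>
    intro u d m h
    constructor
    · rcases u with _ | u
      · rw [cnt_true_zero]; simp [cfT]
      · rcases m with _ | m
        · rw [cnt_true_succ_zero, (ih u d 0 (by omega)).1]
          rcases u with _ | u <;> rcases d with _ | d <;> simp [cfT]
          omega
        · rw [cnt_true_succ_succ, (ih u d (m+1) (by omega)).1, (ih u d m (by omega)).2]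
          rcases u with _ | u <;> rcases d with _ | d <;> simp [cfT, cfF]
          rw [Nat.choose_succ_succ u m]; ring
    · rw [cnt_false]
      rcases d with _ | d
      · rw [cnt_big N true u m (by omega), cnt_big N false u m (by omega)]
        rcases u with _ | u <;> simp [cfF]
      · rw [(ih u d m (by omega)).1, (ih u d m (by omega)).2]
        rcases u with _ | u <;> rcases d with _ | d <;> rcases m with _ | m <;> simp [cfT, cfF]
        rw [Nat.choose_succ_succ d m]; ring

theorem zero_mem_TT {M : ℕ} (w : Fin (M+1) → Bool) :
    0 ∈ TT w ↔ w 0 = false ∧ w (Fin.last M) = true := by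
  have : (0 : Fin (M+1)) - 1 = Fin.last M := by
    rw [sub_eq_iff_eq_add]; simp
  simp [TT, ← this]

theorem succ_mem_TT {M : ℕ} (w : Fin (M+1) → Bool) (i : Fin M) :
    i.succ ∈ TT w ↔ w i.castSucc = true ∧ w i.succ = false := by
  have : i.succ - 1 = i.castSucc := by
    rw [sub_eq_iff_eq_add]; simp
  simp [TT, this, and_comm]

theorem card_TT {M : ℕ} (w : Fin (M+1) → Bool) (h : 0 ∈ TT w) : (TT w).card = pks w + 1 := by
  have h1 : (TT w).card = (univ.filter fun t => t ∈ TT w).card := by simp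
  rw [h1, Finset.card_filter, Fin.sum_univ_succ, if_pos h, add_comm]
  unfold pks
  rw [Finset.card_filter]
  simp only [succ_mem_TT]

theorem st_eq {M : ℕ} (w : Fin (M+1) → Bool) : st w =
    (univ.filter fun i : Fin M => w i.castSucc = true ∧ w i.succ = false ∧ gg w (i.val + 1) ≤ 0).card := by
  have h1 : st w = (univ.filter fun t => t ∈ TT w ∧ t ≠ 0 ∧ gg w t.val ≤ 0).card := by
    unfold st
    congr 1
    ext t; simp
  rw [h1, Finset.card_filter, Fin.sum_univ_succ, Finset.card_filter]
  simp [succ_mem_TT, and_assoc]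

theorem psum_bv {M : ℕ} (w : Fin (M+1) → Bool) (m : ℕ) (hm : m ≤ M + 1) :
    psum (fun i => bv (w i)) m = gg w m := by
  unfold psum gg
  refine Finset.sum_bij (fun i _ => i.val) ?_ ?_ ?_ ?_
  · intro i hi; simpa using hi
  · intro a _ b _ h; exact Fin.ext h
  · intro b hb
    rw [mem_range] at hb
    exact ⟨⟨b, by omega⟩, by simpa using hb, rfl⟩
  · intro i _
    congr 2
    ext; simp [Nat.mod_eq_of_lt i.isLt]

theorem bv_one (b : Bool) : bv b = 1 ↔ b = true := by cases b <;> simp [bv]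
theorem bv_neg (b : Bool) : bv b = -1 ↔ b = false := by cases b <;> simp [bv]

theorem count_A (n k : ℕ) (hn : 1 ≤ n) (hk1 : 1 ≤ k) :
    (univ.filter fun w : Fin (2*n+1) → Bool => (ups w = n+1 ∧ (TT w).card = k) ∧ 0 ∈ TT w).card
     = Nat.choose n (k-1) * Nat.choose (n-1) (k-1) := by
  have h1 := (cnt_closed (2*n) (n+1) n (k-1) (by omega)).2
  obtain ⟨n, rfl⟩ : ∃ m, n = m + 1 := ⟨n-1, by omega⟩
  simp only [cfF] at h1
  rw [Nat.add_sub_cancel, mul_comm ((n+1).choose _), ← h1]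
  unfold cnt
  congr 1
  ext w
  simp only [mem_filter, mem_univ, true_and]
  constructor
  · rintro ⟨⟨a, b⟩, c⟩
    rw [card_TT w c] at b
    rw [zero_mem_TT] at c
    exact ⟨c.1, c.2, a, by omega⟩
  · rintro ⟨a, b, c, d⟩
    have h0 : 0 ∈ TT w := (zero_mem_TT w).2 ⟨a, b⟩
    refine ⟨⟨c, ?_⟩, h0⟩
    rw [card_TT w h0]; omega

/-- Among paths in 𝒫(n,1,1) starting with a down step and ending with an up step
having exactly `k-1` peaks, for each `0 ≤ j ≤ k-1` the number with exactly `j`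
peaks on or below the x-axis is `(1/k)·C(n,k-1)·C(n-1,k-1)`. -/
theorem narayana_chung_feller_peaks (n k : ℕ) (hn : 1 ≤ n) (hk1 : 1 ≤ k) (hk2 : k ≤ n)
    (j : ℕ) (hj : j ≤ k - 1) :
    Nat.card {p : Fin (2*n+1) → ℤ //
      (∀ i, p i = 1 ∨ p i = -1) ∧
      (univ.filter (fun i => p i = 1)).card = n + 1 ∧
      p ⟨0, Nat.succ_pos _⟩ = -1 ∧
      p (Fin.last (2*n)) = 1 ∧
      (univ.filter (fun i : Fin (2*n) => p i.castSucc = 1 ∧ p i.succ = -1)).card = k - 1 ∧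
      (univ.filter (fun i : Fin (2*n) =>
        p i.castSucc = 1 ∧ p i.succ = -1 ∧ psum p ((i : ℕ) + 1) ≤ 0)).card = j }
      * k = Nat.choose n (k-1) * Nat.choose (n-1) (k-1) := by
  have hA := count_A n k hn hk1
  rw [← cyc_main n k j (by omega)] at hA
  rw [← hA]
  congr 1
  rw [← Fintype.card_subtype, ← Nat.card_eq_fintype_card]
  symm
  have hiff : ∀ w : Fin (2*n+1) → Bool,
      ((ups w = n+1 ∧ (TT w).card = k) ∧ 0 ∈ TT w ∧ st w = j) ↔
      ((univ.filter (fun i => bv (w i) = 1)).card = n + 1 ∧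
      bv (w ⟨0, Nat.succ_pos _⟩) = -1 ∧
      bv (w (Fin.last (2*n))) = 1 ∧
      (univ.filter (fun i : Fin (2*n) => bv (w i.castSucc) = 1 ∧ bv (w i.succ) = -1)).card = k - 1 ∧
      (univ.filter (fun i : Fin (2*n) =>
        bv (w i.castSucc) = 1 ∧ bv (w i.succ) = -1 ∧
          psum (fun i => bv (w i)) ((i : ℕ) + 1) ≤ 0)).card = j) := by
    intro w
    have hp : ∀ i : Fin (2*n), psum (fun i => bv (w i)) ((i : ℕ) + 1) = gg w (i.val + 1) :=
      fun i => psum_bv w _ (by omega)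
    simp only [bv_one, bv_neg, hp]
    rw [← st_eq]
    change _ ↔ ups w = n + 1 ∧ w 0 = false ∧ w (Fin.last (2*n)) = true ∧ pks w = k - 1 ∧ st w = j
    constructor
    · rintro ⟨⟨a, b⟩, c, d⟩
      rw [card_TT w c] at b
      rw [zero_mem_TT] at c
      exact ⟨a, c.1, c.2, by omega, d⟩
    · rintro ⟨a, b, c, d, e⟩
      have h0 : 0 ∈ TT w := (zero_mem_TT w).2 ⟨b, c⟩
      refine ⟨⟨a, ?_⟩, h0, e⟩
      rw [card_TT w h0]; omega
  refine Nat.card_eq_of_bijective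
    (fun w => ⟨fun i => bv (w.1 i), fun i => ?_, (hiff w.1).1 w.2⟩) ⟨?_, ?_⟩
  · cases w.1 i <;> simp [bv]
  · intro a b h
    apply Subtype.ext
    funext i
    have h2 := congrFun (congrArg Subtype.val h) i
    simp only at h2
    have := bv_one (a.1 i)
    rw [h2, bv_one] at this
    exact Bool.eq_iff_iff.2 this.symm
  · rintro ⟨p, hp, hq⟩
    have he : p = fun i => bv (decide (p i = 1)) := by
      funext i
      rcases hp i with h | h <;> simp [h, bv]
    refine ⟨⟨fun i => decide (p i = 1), (hiff _).2 ?_⟩, ?_⟩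
    · rw [he] at hq
      exact hq
    · apply Subtype.ext
      exact he.symm
end

section
/- Let n ≥ 1 and k ≥ 1. For each j with 1 ≤ j ≤ k, the number of paths p in 𝒫(n−1,1,2) with p_1 = +1 that have exactly k up steps in even positions, of which exactly j start on or below the x-axis, equals (1/k)·C(n−1,k−1)·C(n,k−1); in particular this count is independent of j and equals the Narayana number N(n,k). -/
open Finset

set_option linter.all false
set_option linter.unusedSimpArgs false
set_option linter.unusedSectionVars false

namespace Nar

lemma rank_unique {ι : Type*} [DecidableEq ι] (A : Finset ι) (f : ι → ℤ)
    (hf : ∀ x ∈ A, ∀ y ∈ A, f x = f y → x = y) (j : ℕ) (h1 : 1 ≤ j) (h2 : j ≤ A.card) :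
    (A.filter (fun r => (A.filter (fun i => f i ≤ f r)).card = j)).card = 1 := by
  have hmono : ∀ x ∈ A, ∀ y ∈ A, f x < f y →
      (A.filter (fun i => f i ≤ f x)).card < (A.filter (fun i => f i ≤ f y)).card := by
    intro x hx y hy hxy
    apply Finset.card_lt_card
    rw [Finset.ssubset_iff_of_subset]
    · exact ⟨y, by simp [hy], by simp [hxy]⟩
    · intro i hi
      simp only [Finset.mem_filter] at hi ⊢
      exact ⟨hi.1, by linarith [hi.2]⟩
  have hinj : ∀ x ∈ A, ∀ y ∈ A, (A.filter (fun i => f i ≤ f x)).card =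
      (A.filter (fun i => f i ≤ f y)).card → x = y := by
    intro x hx y hy hxy
    apply hf x hx y hy
    rcases lt_trichotomy (f x) (f y) with h | h | h
    · have := hmono x hx y hy h
      omega
    · exact h
    · have := hmono y hy x hx h
      omega
  have himg : A.image (fun r => (A.filter (fun i => f i ≤ f r)).card) = Finset.Icc 1 A.card := by
    apply Finset.eq_of_subset_of_card_le
    · intro c hc
      simp only [Finset.mem_image] at hc
      obtain ⟨r, hr, rfl⟩ := hc
      simp only [Finset.mem_Icc]
      refine ⟨Finset.card_pos.mpr ⟨r, by simp [hr]⟩, Finset.card_le_card (Finset.filter_subset _ _)⟩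
    · rw [Finset.card_image_of_injOn]
      · simp
      · intro x hx y hy hxy
        exact hinj x hx y hy hxy
  have hj : j ∈ A.image (fun r => (A.filter (fun i => f i ≤ f r)).card) := by
    rw [himg]; simp [h1, h2]
  simp only [Finset.mem_image] at hj
  obtain ⟨r, hr, hrj⟩ := hj
  rw [Finset.card_eq_one]
  refine ⟨r, ?_⟩
  ext x
  simp only [Finset.mem_filter, Finset.mem_singleton]
  constructor
  · rintro ⟨hx, hxj⟩
    exact hinj x hx r hr (by omega)
  · rintro rfl
    exact ⟨hr, hrj⟩

variable {n : ℕ} [NeZero n]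

/-- half-increment over the pair of steps -/
def w (P : Finset (Fin n) × Finset (Fin n)) (i : Fin n) : ℤ :=
  (if i ∈ P.1 then 1 else 0) + (if i ∈ P.2 then 1 else 0) - 1

/-- half of the height, extended periodically -/
def S (P : Finset (Fin n) × Finset (Fin n)) (m : ℕ) : ℤ :=
  ∑ t ∈ Finset.range m, w P (Fin.ofNat n t)

def stat (P : Finset (Fin n) × Finset (Fin n)) : ℕ :=
  (P.1.filter (fun i : Fin n => S P (i : ℕ) ≤ 0)).card

def rotS (r : Fin n) (A : Finset (Fin n)) : Finset (Fin n) :=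
  A.map (Equiv.subRight r).toEmbedding

lemma mem_rotS (r i : Fin n) (A : Finset (Fin n)) : i ∈ rotS r A ↔ i + r ∈ A := by
  simp [rotS, sub_eq_iff_eq_add]

lemma card_rotS (r : Fin n) (A : Finset (Fin n)) : (rotS r A).card = A.card := by
  simp [rotS]

def rot (r : Fin n) (P : Finset (Fin n) × Finset (Fin n)) : Finset (Fin n) × Finset (Fin n) :=
  (rotS r P.1, rotS r P.2)

lemma rotS_neg (r : Fin n) (A : Finset (Fin n)) : rotS (-r) (rotS r A) = A := by
  ext i; simp [mem_rotS]

lemma rotS_neg' (r : Fin n) (A : Finset (Fin n)) : rotS r (rotS (-r) A) = A := by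
  ext i; simp [mem_rotS]

lemma w_rot (r i : Fin n) (P : Finset (Fin n) × Finset (Fin n)) : w (rot r P) i = w P (i + r) := by
  simp [w, rot, mem_rotS]

lemma ofNat_add_val (t : ℕ) (r : Fin n) : Fin.ofNat n t + r = Fin.ofNat n (r.val + t) := by
  ext
  simp [Fin.val_add, Fin.ofNat, add_comm]

lemma S_rot (r : Fin n) (m : ℕ) (P : Finset (Fin n) × Finset (Fin n)) :
    S (rot r P) m = S P (r.val + m) - S P r.val := by
  unfold S
  rw [Finset.sum_range_add]
  simp only [w_rot, ofNat_add_val]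
  ring

lemma S_n (P : Finset (Fin n) × Finset (Fin n)) (hP : P.1.card + P.2.card = n + 1) : S P n = 1 := by
  have h1 : S P n = ∑ i : Fin n, w P i := by
    unfold S
    rw [Finset.sum_range]
    apply Finset.sum_congr rfl
    intro i _
    congr 1
    ext
    simp [Fin.ofNat, Nat.mod_eq_of_lt i.isLt]
  rw [h1]
  simp only [w, Finset.sum_add_distrib, Finset.sum_sub_distrib]
  simp
  omega

lemma S_add_n (P : Finset (Fin n) × Finset (Fin n)) (hP : P.1.card + P.2.card = n + 1) (m : ℕ) :
    S P (n + m) = S P m + 1 := by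
  have := S_n P hP
  unfold S at *
  rw [Finset.sum_range_add, this, add_comm]
  congr 1
  apply Finset.sum_congr rfl
  intro t _
  congr 1
  ext
  simp [Fin.ofNat]

def key (P : Finset (Fin n) × Finset (Fin n)) (i : Fin n) : ℤ := n * S P i - i

lemma key_aux (a b N x y : ℤ) (hx : 0 ≤ x) (hxN : x < N) (hy : 0 ≤ y) (hyN : y < N) :
    N * a - x ≤ N * b - y ↔ (y ≤ x ∧ a ≤ b) ∨ (x < y ∧ a + 1 ≤ b) := by
  constructor
  · intro h
    rcases le_or_gt y x with h1 | h1
    · left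
      refine ⟨h1, ?_⟩
      by_contra hc
      nlinarith
    · right
      refine ⟨h1, ?_⟩
      by_contra hc
      nlinarith
  · rintro (⟨h1, h2⟩ | ⟨h1, h2⟩) <;> nlinarith

lemma key_inj (P : Finset (Fin n) × Finset (Fin n)) (x y : Fin n) (h : key P x = key P y) :
    x = y := by
  have hx := x.isLt
  have hy := y.isLt
  have h1 := (key_aux (S P x) (S P y) n x y (by omega) (by omega) (by omega) (by omega)).1 h.le
  have h2 := (key_aux (S P y) (S P x) n y x (by omega) (by omega) (by omega) (by omega)).1 h.ge
  ext
  omega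

lemma stat_rot (P : Finset (Fin n) × Finset (Fin n)) (hP : P.1.card + P.2.card = n + 1)
    (r : Fin n) : stat (rot r P) = (P.1.filter (fun i => key P i ≤ key P r)).card := by
  unfold stat
  have hmain : ∀ i : Fin n, S (rot r P) i ≤ 0 ↔ key P (i + r) ≤ key P r := by
    intro i
    unfold key
    have hir := (i + r).isLt
    rw [key_aux _ _ _ _ _ (Int.natCast_nonneg _) (Int.ofNat_lt.mpr hir) (by omega) (by omega), S_rot, Fin.val_add]
    have hi := i.isLt
    have hr := r.isLt
    by_cases hlt : i.val + r.val < n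
    · rw [Nat.mod_eq_of_lt hlt, add_comm r.val]
      constructor
      · intro h; left; constructor <;> push_cast <;> omega
      · rintro (h | h)
        · omega
        · push_cast at h; omega
    · have e : r.val + i.val = n + (i.val + r.val - n) := by omega
      have e2 : (i.val + r.val) % n = i.val + r.val - n := by
        rw [Nat.mod_eq_sub_mod (by omega), Nat.mod_eq_of_lt (by omega)]
      rw [e2, e, S_add_n P hP]
      constructor
      · intro h; right; constructor <;> omega
      · rintro (h | h) <;> omega
  apply Finset.card_bij (fun i _ => i + r)
  · intro i hi
    simp only [Finset.mem_filter] at hi ⊢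
    refine ⟨by simpa [rot, mem_rotS] using hi.1, (hmain i).1 hi.2⟩
  · intro a _ b _ h
    simpa using h
  · intro b hb
    simp only [Finset.mem_filter] at hb
    refine ⟨b - r, ?_, by simp⟩
    simp only [Finset.mem_filter, hmain]
    simpa [rot, mem_rotS] using hb

variable (n) in
def Y (k : ℕ) : Finset (Finset (Fin n) × Finset (Fin n)) :=
  univ.filter (fun P => P.1.card = k ∧ P.1.card + P.2.card = n + 1)

variable (n) in
def X (k j : ℕ) : Finset (Finset (Fin n) × Finset (Fin n)) :=
  (Y n k).filter (fun P => 0 ∈ P.1 ∧ stat P = j)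

lemma rot_mem_Y (k : ℕ) (r : Fin n) (P : Finset (Fin n) × Finset (Fin n)) :
    rot r P ∈ Y n k ↔ P ∈ Y n k := by
  simp [Y, rot, card_rotS]

lemma double (k j : ℕ) (h1 : 1 ≤ j) (h2 : j ≤ k) : n * (X n k j).card = (Y n k).card := by
  have hA : ∀ P ∈ Y n k, ((univ : Finset (Fin n)).filter (fun r => rot r P ∈ X n k j)).card = 1 := by
    intro P hP
    have hP' := hP
    simp only [Y, Finset.mem_filter, Finset.mem_univ, true_and] at hP'
    rw [← rank_unique P.1 (key P) (fun x _ y _ h => key_inj P x y h) j h1 (by omega)]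
    congr 1
    ext r
    simp only [Finset.mem_filter, Finset.mem_univ, true_and, X, rot_mem_Y, hP,
      stat_rot P hP'.2]
    simp [rot, mem_rotS]
  have hB : ∀ r : Fin n, ((Y n k).filter (fun P => rot r P ∈ X n k j)).card = (X n k j).card := by
    intro r
    apply Finset.card_bij (fun P _ => rot r P)
    · intro P hP
      exact (Finset.mem_filter.1 hP).2
    · intro P _ Q _ h
      have : rot (-r) (rot r P) = rot (-r) (rot r Q) := by rw [h]
      simpa [rot, rotS_neg] using this
    · intro Q hQ
      have e : rot r (rot (-r) Q) = Q := by simp [rot, rotS_neg']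
      refine ⟨rot (-r) Q, ?_, e⟩
      rw [Finset.mem_filter, e, rot_mem_Y]
      exact ⟨(Finset.mem_filter.1 hQ).1, hQ⟩
  have hd := Finset.sum_card_bipartiteAbove_eq_sum_card_bipartiteBelow
    (s := Y n k) (t := (univ : Finset (Fin n))) (fun P r => rot r P ∈ X n k j)
  unfold Finset.bipartiteAbove Finset.bipartiteBelow at hd
  rw [Finset.sum_congr rfl hA, Finset.sum_congr rfl (fun r _ => hB r)] at hd
  simpa using hd.symm

lemma card_Y (k : ℕ) (hk : 1 ≤ k) : (Y n k).card = n.choose k * n.choose (k - 1) := by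
  rcases le_or_gt k n with h | h
  · have : Y n k = Finset.powersetCard k univ ×ˢ Finset.powersetCard (n + 1 - k) univ := by
      ext P
      simp only [Y, Finset.mem_filter, Finset.mem_product, Finset.mem_powersetCard,
        Finset.mem_univ, true_and, Finset.subset_univ]
      omega
    rw [this, Finset.card_product, Finset.card_powersetCard, Finset.card_powersetCard]
    simp only [Finset.card_univ, Fintype.card_fin]
    congr 1
    rw [← Nat.choose_symm (by omega)]
    congr 1
    omega
  · rw [Nat.choose_eq_zero_of_lt h, zero_mul, Finset.card_eq_zero]
    ext P
    have := Finset.card_le_univ P.1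
    simp only [Fintype.card_fin] at this
    simp [Y]
    omega

lemma card_X (k j : ℕ) (h1 : 1 ≤ j) (h2 : j ≤ k) :
    (X n k j).card * k = (n - 1).choose (k - 1) * n.choose (k - 1) := by
  have hn : 0 < n := Nat.pos_of_ne_zero (NeZero.ne n)
  have hd := double (n := n) k j h1 h2
  rw [card_Y k (by omega)] at hd
  apply Nat.eq_of_mul_eq_mul_left hn
  obtain ⟨m, rfl⟩ : ∃ m, n = m + 1 := ⟨n - 1, by omega⟩
  obtain ⟨l, rfl⟩ : ∃ l, k = l + 1 := ⟨k - 1, by omega⟩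
  have := Nat.add_one_mul_choose_eq m l
  simp only [Nat.add_sub_cancel] at *
  rw [← mul_assoc, hd, ← mul_assoc, this]
  ring

/-! ### translation between paths and pairs of sets -/

def ev (i : Fin n) : Fin (2 * n) := ⟨2 * i.val, by omega⟩
def od (i : Fin n) : Fin (2 * n) := ⟨2 * i.val + 1, by omega⟩
def half (m : Fin (2 * n)) : Fin n := ⟨m.val / 2, by omega⟩

def G (p : Fin (2 * n) → ℤ) : Finset (Fin n) × Finset (Fin n) :=
  (univ.filter (fun i => p (ev i) = 1), univ.filter (fun i => p (od i) = 1))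

def F (P : Finset (Fin n) × Finset (Fin n)) (m : Fin (2 * n)) : ℤ :=
  if m.val % 2 = 0 then (if half m ∈ P.1 then 1 else -1) else (if half m ∈ P.2 then 1 else -1)

lemma mem_G1 (p : Fin (2 * n) → ℤ) (i : Fin n) : i ∈ (G p).1 ↔ p (ev i) = 1 := by
  simp [G]

lemma mem_G2 (p : Fin (2 * n) → ℤ) (i : Fin n) : i ∈ (G p).2 ↔ p (od i) = 1 := by
  simp [G]

lemma F_pm (P : Finset (Fin n) × Finset (Fin n)) (m) : F P m = 1 ∨ F P m = -1 := by
  unfold F; split_ifs <;> simp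

lemma half_ev (i : Fin n) : half (ev i) = i := by
  ext; simp [half, ev]

lemma half_od (i : Fin n) : half (od i) = i := by
  ext; simp only [half, od]; omega

lemma ev_half (m : Fin (2 * n)) (h : m.val % 2 = 0) : ev (half m) = m := by
  ext; simp only [half, ev]; omega

lemma od_half (m : Fin (2 * n)) (h : ¬ m.val % 2 = 0) : od (half m) = m := by
  ext; simp only [half, od]; omega

lemma ev_mod (i : Fin n) : (ev i).val % 2 = 0 := by simp [ev]
lemma od_mod (i : Fin n) : ¬ (od i).val % 2 = 0 := by simp only [od]; omega

lemma GF (P : Finset (Fin n) × Finset (Fin n)) : G (F P) = P := by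
  ext i
  · simp only [G, F, ev_mod, half_ev, Finset.mem_filter, Finset.mem_univ, true_and, if_true]
    split_ifs <;> simp_all
  · simp only [G, F, od_mod, half_od, Finset.mem_filter, Finset.mem_univ, true_and, if_false]
    split_ifs <;> simp_all

lemma FG (p : Fin (2 * n) → ℤ) (hp : ∀ m, p m = 1 ∨ p m = -1) : F (G p) = p := by
  ext m
  by_cases h : m.val % 2 = 0
  · simp only [F, h, G, if_true, Finset.mem_filter, Finset.mem_univ, true_and, ev_half m h]
    rcases hp m with h | h <;> simp [h]
  · simp only [F, h, G, if_false, Finset.mem_filter, Finset.mem_univ, true_and, od_half m h]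
    rcases hp m with h | h <;> simp [h]

lemma card_even (Q : Fin (2 * n) → Prop) [DecidablePred Q] :
    (univ.filter (fun m : Fin (2 * n) => Q m ∧ m.val % 2 = 0)).card =
      (univ.filter (fun i : Fin n => Q (ev i))).card := by
  symm
  apply Finset.card_bij (fun i _ => ev i)
  · intro i hi
    simpa [ev_mod] using hi
  · intro a _ b _ h
    rw [← half_ev a, h, half_ev]
  · intro m hm
    simp only [Finset.mem_filter, Finset.mem_univ, true_and] at hm
    exact ⟨half m, by simp [ev_half m hm.2, hm.1], ev_half m hm.2⟩

lemma card_odd (Q : Fin (2 * n) → Prop) [DecidablePred Q] :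
    (univ.filter (fun m : Fin (2 * n) => Q m ∧ ¬ m.val % 2 = 0)).card =
      (univ.filter (fun i : Fin n => Q (od i))).card := by
  symm
  apply Finset.card_bij (fun i _ => od i)
  · intro i hi
    simp only [Finset.mem_filter, Finset.mem_univ, true_and] at hi ⊢
    exact ⟨hi, od_mod i⟩
  · intro a _ b _ h
    rw [← half_od a, h, half_od]
  · intro m hm
    simp only [Finset.mem_filter, Finset.mem_univ, true_and] at hm
    exact ⟨half m, by simp [od_half m hm.2, hm.1], od_half m hm.2⟩

lemma psum_succ {N : ℕ} (p : Fin N → ℤ) (m : ℕ) (h : m < N) :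
    psum p (m + 1) = psum p m + p ⟨m, h⟩ := by
  unfold psum
  have : (univ.filter (fun j : Fin N => (j : ℕ) < m + 1)) =
      insert ⟨m, h⟩ (univ.filter (fun j : Fin N => (j : ℕ) < m)) := by
    ext i
    simp only [Finset.mem_filter, Finset.mem_univ, true_and, Finset.mem_insert, Fin.ext_iff]
    omega
  rw [this, Finset.sum_insert (by simp), add_comm]

lemma psum_S (p : Fin (2 * n) → ℤ) (hp : ∀ m, p m = 1 ∨ p m = -1) (m : ℕ) (hm : m ≤ n) :
    psum p (2 * m) = 2 * S (G p) m := by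
  induction m with
  | zero => simp [psum, S]
  | succ m ih =>
    have ih' := ih (by omega)
    rw [show 2 * (m + 1) = 2 * m + 1 + 1 by ring, psum_succ p _ (by omega),
      psum_succ p _ (by omega), ih']
    have hs : S (G p) (m + 1) = S (G p) m + w (G p) (Fin.ofNat n m) := by
      unfold S; rw [Finset.sum_range_succ]
    have e : Fin.ofNat n m = ⟨m, by omega⟩ := by
      ext; simp only [Fin.ofNat]; exact Nat.mod_eq_of_lt (by omega)
    rw [hs, e]
    simp only [w, mem_G1, mem_G2, ev, od]
    rcases hp ⟨2 * m, by omega⟩ with h | h <;> rcases hp ⟨2 * m + 1, by omega⟩ with h' | h' <;>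
      simp only [h, h'] <;> norm_num <;> ring

lemma cond_iff (k j : ℕ) (p : Fin (2 * n) → ℤ) (hp : ∀ m, p m = 1 ∨ p m = -1)
    (h0 : 0 < 2 * n) :
    ((univ.filter (fun m => p m = 1)).card = n + 1 ∧
      p ⟨0, h0⟩ = 1 ∧
      (univ.filter (fun m : Fin (2*n) => p m = 1 ∧ (m : ℕ) % 2 = 0)).card = k ∧
      (univ.filter (fun m : Fin (2*n) =>
        p m = 1 ∧ (m : ℕ) % 2 = 0 ∧ psum p (m : ℕ) ≤ 0)).card = j) ↔ G p ∈ X n k j := by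
  have e1 : (univ.filter (fun m : Fin (2*n) => p m = 1 ∧ (m : ℕ) % 2 = 0)).card
      = (G p).1.card := card_even (fun m => p m = 1)
  have e2 : (univ.filter (fun m : Fin (2*n) => p m = 1)).card
      = (G p).1.card + (G p).2.card := by
    have := Finset.card_filter_add_card_filter_not
      (s := univ.filter (fun m : Fin (2*n) => p m = 1)) (fun m => (m : ℕ) % 2 = 0)
    rw [Finset.filter_filter, Finset.filter_filter, e1, card_odd (fun m => p m = 1)] at this
    exact this.symm
  have e3 : (univ.filter (fun m : Fin (2*n) =>
        p m = 1 ∧ (m : ℕ) % 2 = 0 ∧ psum p (m : ℕ) ≤ 0)).card = stat (G p) := by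
    have := card_even (fun m : Fin (2 * n) => p m = 1 ∧ psum p (m : ℕ) ≤ 0)
    have e : (univ.filter (fun m : Fin (2*n) =>
        p m = 1 ∧ (m : ℕ) % 2 = 0 ∧ psum p (m : ℕ) ≤ 0)) = univ.filter (fun m : Fin (2*n) =>
        (p m = 1 ∧ psum p (m : ℕ) ≤ 0) ∧ (m : ℕ) % 2 = 0) := by
      ext m; simp only [Finset.mem_filter]; tauto
    rw [e, this]
    unfold stat
    congr 1
    ext i
    have hi := i.isLt
    have := psum_S p hp i (by omega)
    have e' : ((ev i : Fin (2 * n)) : ℕ) = 2 * i.val := rfl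
    simp only [Finset.mem_filter, Finset.mem_univ, true_and, e', this]
    have : 2 * S (G p) i.val ≤ 0 ↔ S (G p) i.val ≤ 0 := by omega
    rw [this]
    simp [G]
  have e4 : p ⟨0, h0⟩ = 1 ↔ (0 : Fin n) ∈ (G p).1 := by
    rw [mem_G1]
    have : (⟨0, h0⟩ : Fin (2 * n)) = ev 0 := by ext; simp [ev]
    rw [this]
  rw [e1, e2, e3, e4]
  simp only [X, Y, Finset.mem_filter, Finset.mem_univ, true_and]
  tauto

end Nar

/-- Among paths in 𝒫(n−1,1,2) (length 2n, n+1 up steps, n−1 down steps) starting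
with an up step and having exactly `k` up steps in even positions, for each
`1 ≤ j ≤ k` the number with exactly `j` even-position up steps starting on or
below the x-axis is `(1/k)·C(n-1,k-1)·C(n,k-1)`, the Narayana number `N(n,k)`. -/
theorem narayana_even_up_steps (n k : ℕ) (hn : 1 ≤ n) (hk : 1 ≤ k)
    (j : ℕ) (hj1 : 1 ≤ j) (hj2 : j ≤ k) :
    Nat.card {p : Fin (2*n) → ℤ //
      (∀ m, p m = 1 ∨ p m = -1) ∧
      (univ.filter (fun m => p m = 1)).card = n + 1 ∧
      p ⟨0, by omega⟩ = 1 ∧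
      (univ.filter (fun m : Fin (2*n) => p m = 1 ∧ (m : ℕ) % 2 = 0)).card = k ∧
      (univ.filter (fun m : Fin (2*n) =>
        p m = 1 ∧ (m : ℕ) % 2 = 0 ∧ psum p (m : ℕ) ≤ 0)).card = j }
      * k = Nat.choose (n-1) (k-1) * Nat.choose n (k-1) := by
  haveI : NeZero n := ⟨by omega⟩
  rw [← Nar.card_X k j hj1 hj2]
  congr 1
  rw [← Fintype.card_coe, ← Nat.card_eq_fintype_card]
  exact Nat.card_congr
    { toFun := fun p => ⟨Nar.G p.1, (Nar.cond_iff k j p.1 p.2.1 (by omega)).1 p.2.2⟩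
      invFun := fun P => ⟨Nar.F P.1, Nar.F_pm P.1,
        (Nar.cond_iff k j (Nar.F P.1) (Nar.F_pm P.1) (by omega)).2 (by
          rw [Nar.GF]; exact P.2)⟩
      left_inv := fun p => Subtype.ext (Nar.FG p.1 p.2.1)
      right_inv := fun P => Subtype.ext (Nar.GF P.1) }
end
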